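/- Let Λ be a cyclic Nakayama algebra given by an irredundant system of r monomial relations, and let Δ = {Δ_1, …, Δ_r} be the associated set of Δ-modules. If some Δ_j is a projective Λ-module, then Λ has finite global dimension. -/

import Mathlib

/-!
Indecomposable modules over a cyclic Nakayama algebra are uniserial, and each is recorded by an
integer interval `[a, b)`: its top is `S_a`, its length is `b - a`, and going down its
radical series the composition factors are `S_a, S_{a+1}, …, S_{b-1}` (`Occupies`). The
projective `P_a` occupies `[a, e a)` with `e a = a + c_a` (`projEnd`), so the syzygy of a module
occupying `[a, b)` occupies `[b, e a)` (`Occupies.exists_syzygy`), and the second syzygy occupies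
`[e a, e b)`. The map `e : ℤ → ℤ` is monotone, commutes with translation by `N`, and satisfies
`v < e v`; finiteness of the global dimension is thus a statement about iterating `e`.

The endpoints of the projectives attached to the relations `j - 1` and `j` are two consecutive
values `x < y` of `e`, congruent to `k_{2(j-1)} + 1` and `k_{2j} + 1`
(`exists_consecutive_ends`). Hence `Δ_j`, being shortest with its top and socle, occupies
`[x, y)`. If it is projective it is `P_x`, so `y = e x`: no value of `e` lies strictly between `x`
and `e x`. Applying `e` repeatedly, no value of `e^[n]` lies strictly between `e^[k] x` and
`e^[k+1] x` for `k < n`. For `n > N` the orbit segment `x, e x, …, e^[N] x` covers a full period,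
so all values of `e^[n]` are translates of orbit points, and for `a ≤ b ≤ e a` the number
`e^[n] b` equals `e^[n] a` or `e^[n+1] a` (`iterate_eq_or_eq`). Thus a syzygy of bounded index of
any indecomposable module vanishes. Finitely generated modules are finite direct sums of
indecomposables, and projective covers are compatible with direct sums (`IsSyzygy.prod`).
-/

/-!
Common definitions: Igusa–Todorov φ-function, syzygies, and cyclic Nakayama
algebras presented by monomial relations, following E. Sen,
"The φ-dimension of cyclic Nakayama algebras".
-/

noncomputable section

namespace PhiDim

variable (Λ : Type) [Ring Λ]

/-- A module is *uniserial* if its submodules are totally ordered by inclusion. -/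
def IsUniserial (M : ModuleCat.{0} Λ) : Prop :=
  ∀ N₁ N₂ : Submodule Λ M, N₁ ≤ N₂ ∨ N₂ ≤ N₁

/-- A module is *indecomposable* if it is nonzero and admits no nontrivial
direct sum decomposition. -/
def Indec (M : ModuleCat.{0} Λ) : Prop :=
  Nontrivial M ∧ ∀ N N' : Submodule Λ M, IsCompl N N' → N = ⊥ ∨ N' = ⊥

/-- `X` is (isomorphic to) a direct summand of `M`. -/
def IsSummand (X M : ModuleCat.{0} Λ) : Prop :=
  ∃ N N' : Submodule Λ M, IsCompl N N' ∧ Nonempty (X ≃ₗ[Λ] N)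

/-- `f : P → M` is a projective cover: `P` is projective, `f` is surjective and
its kernel is superfluous in `P`. -/
def IsProjCover {P M : ModuleCat.{0} Λ} (f : P →ₗ[Λ] M) : Prop :=
  Module.Projective Λ P ∧ Function.Surjective f ∧
    ∀ N : Submodule Λ P, N ⊔ LinearMap.ker f = ⊤ → N = ⊤

/-- `Y` is (isomorphic to) the first syzygy `Ω M`, i.e. the kernel of a
projective cover of `M`. -/
def IsSyzygy (Y M : ModuleCat.{0} Λ) : Prop :=
  ∃ (P : ModuleCat.{0} Λ) (f : P →ₗ[Λ] M), IsProjCover Λ f ∧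
    Nonempty (Y ≃ₗ[Λ] LinearMap.ker f)

/-- `Y` is (isomorphic to) the `n`-th syzygy `Ω^n M`. -/
def IsNthSyzygy : ℕ → ModuleCat.{0} Λ → ModuleCat.{0} Λ → Prop
  | 0, Y, M => Nonempty (Y ≃ₗ[Λ] M)
  | n + 1, Y, M => ∃ Z : ModuleCat.{0} Λ, IsSyzygy Λ Z M ∧ IsNthSyzygy n Y Z

/-- `M` is `Ω`-periodic: `Ω^k M ≅ M` for some `k ≥ 1`. -/
def IsPeriodic (M : ModuleCat.{0} Λ) : Prop :=
  ∃ k : ℕ, 1 ≤ k ∧ IsNthSyzygy Λ k M M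

/-- Projective dimension at most `n` (via minimal projective resolutions:
the `n`-th syzygy is projective). -/
def PdimLE (M : ModuleCat.{0} Λ) (n : ℕ) : Prop :=
  ∃ Y : ModuleCat.{0} Λ, IsNthSyzygy Λ n Y M ∧ Module.Projective Λ Y

/-- `M` has infinite projective dimension. -/
def HasInfinitePdim (M : ModuleCat.{0} Λ) : Prop :=
  ¬ ∃ n : ℕ, PdimLE Λ M n

/-- The (left) global dimension is at most `n`: every finitely generated module
has projective dimension at most `n`. -/
def GlobalDimLE (n : ℕ) : Prop :=
  ∀ M : ModuleCat.{0} Λ, Module.Finite Λ M → PdimLE Λ M n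

/-- `Λ` has infinite global dimension. -/
def HasInfiniteGlobalDim : Prop := ¬ ∃ n : ℕ, GlobalDimLE Λ n

/-- `M` has composition length `n`. -/
def HasLength (M : ModuleCat.{0} Λ) (n : ℕ) : Prop :=
  ∃ s : CompositionSeries (Submodule Λ M), s.head = ⊥ ∧ s.last = ⊤ ∧ s.length = n

/-- The socle of a uniserial module: the smallest nonzero submodule. -/
def socle (M : Type) [AddCommGroup M] [Module Λ M] : Submodule Λ M :=
  sInf {N : Submodule Λ M | N ≠ ⊥}

/-- The radical of a uniserial (local) module: the largest proper submodule. -/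
def radical (M : Type) [AddCommGroup M] [Module Λ M] : Submodule Λ M :=
  sSup {N : Submodule Λ M | N ≠ ⊤}

/-- `soc M ≅ T`. -/
def SocIso (M T : ModuleCat.{0} Λ) : Prop :=
  Nonempty (socle Λ M ≃ₗ[Λ] T)

/-- `top M = M / rad M ≅ T`. -/
def TopIso (M T : ModuleCat.{0} Λ) : Prop :=
  Nonempty ((M ⧸ radical Λ M) ≃ₗ[Λ] T)

/-- `T` is a composition factor (a simple subquotient) of `M`. -/
def IsCompFactorOf (T M : ModuleCat.{0} Λ) : Prop :=
  ∃ (N₁ : Submodule Λ M) (N₀ : Submodule Λ N₁),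
    Nonempty ((N₁ ⧸ N₀) ≃ₗ[Λ] T)

/-- The number of composition factors of a composition series `s` of `M`
isomorphic to `T`. -/
def factorCount (M : ModuleCat.{0} Λ) (s : CompositionSeries (Submodule Λ M))
    (T : ModuleCat.{0} Λ) : ℕ :=
  Nat.card {i : Fin s.length //
    Nonempty ((s i.succ ⧸ Submodule.comap (s i.succ).subtype (s i.castSucc)) ≃ₗ[Λ] T)}

/-! ### The Igusa–Todorov function φ -/

/-- Finitely generated modules. -/
def FGMod := {M : ModuleCat.{0} Λ // Module.Finite Λ M}

/-- Generators of the relations defining `K₀`: `[C] - [A] - [B]` for `C ≅ A ⊕ B`,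
and `[P]` for `P` projective. -/
def K0RelSet : Set (FreeAbelianGroup (FGMod Λ)) :=
  {x | ∃ A B C : FGMod Λ, Nonempty ((C.1 : Type) ≃ₗ[Λ] ((A.1 : Type) × (B.1 : Type))) ∧
        x = FreeAbelianGroup.of C - FreeAbelianGroup.of A - FreeAbelianGroup.of B} ∪
  {x | ∃ P : FGMod Λ, Module.Projective Λ P.1 ∧ x = FreeAbelianGroup.of P}

def K0Rel : AddSubgroup (FreeAbelianGroup (FGMod Λ)) :=
  AddSubgroup.closure (K0RelSet Λ)

/-- `K₀`: the free abelian group on finitely generated modules, modulo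
`[A ⊕ B] = [A] + [B]` and `[P] = 0` for projective `P`. -/
def K0 := FreeAbelianGroup (FGMod Λ) ⧸ K0Rel Λ

instance : AddCommGroup (K0 Λ) := QuotientAddGroup.Quotient.addCommGroup _

/-- The class `[M]` of a finitely generated module in `K₀`. -/
def classOf (M : FGMod Λ) : K0 Λ := QuotientAddGroup.mk (FreeAbelianGroup.of M)

/-- Generators of the subgroup `L^t ⟨add M⟩` of `K₀`: classes of `t`-th syzygies of
the indecomposable direct summands of `M`. -/
def addGens (M : ModuleCat.{0} Λ) (t : ℕ) : Set (K0 Λ) :=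
  {k | ∃ X : ModuleCat.{0} Λ, Indec Λ X ∧ IsSummand Λ X M ∧
        ∃ Y : FGMod Λ, IsNthSyzygy Λ t Y.1 X ∧ k = classOf Λ Y}

/-- The rank of `L^t ⟨add M⟩`. -/
def syzygyRank (M : ModuleCat.{0} Λ) (t : ℕ) : Cardinal :=
  Module.rank ℤ (AddSubgroup.closure (addGens Λ M t))

/-- The Igusa–Todorov function
`φ(M) = min { t | rank L^t ⟨add M⟩ = rank L^{t+j} ⟨add M⟩ for all j ≥ 1 }`. -/
def phi (M : ModuleCat.{0} Λ) : ℕ :=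
  sInf {t : ℕ | ∀ j : ℕ, 1 ≤ j → syzygyRank Λ M (t + j) = syzygyRank Λ M t}

/-- `φdim Λ = sup { φ(M) | M a finitely generated Λ-module }`. -/
def phiDim : ℕ∞ := ⨆ M : FGMod Λ, (phi Λ M.1 : ℕ∞)

/-- Isomorphism of modules as a setoid on `ModuleCat Λ`. -/
def isoSetoid : Setoid (ModuleCat.{0} Λ) where
  r M N := Nonempty (M ≃ₗ[Λ] N)
  iseqv := ⟨fun M => ⟨LinearEquiv.refl Λ M⟩, fun ⟨e⟩ => ⟨e.symm⟩, fun ⟨e⟩ ⟨f⟩ => ⟨e.trans f⟩⟩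

/-- `α(X)`: the number of pairwise non-isomorphic, non-projective, indecomposable
direct summands of `X`. -/
def alpha (X : ModuleCat.{0} Λ) : ℕ :=
  Nat.card {c : Quotient (isoSetoid Λ) // ∃ Y : ModuleCat.{0} Λ,
    Quotient.mk (isoSetoid Λ) Y = c ∧ Indec Λ Y ∧ ¬ Module.Projective Λ Y ∧ IsSummand Λ Y X}

/-! ### Cyclic Nakayama algebras presented by monomial relations -/

/-- A cyclic Nakayama artin algebra `Λ` on `N ≥ 3` vertices, presented by an
irredundant system of `r` monomial relations `α_{k_{2j}} ⋯ α_{k_{2j-1}} = 0`.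

* `S i` (for `i : ZMod N`) are the simple modules attached to the vertices of the
  cyclic quiver, `P i` a projective cover of `S i`, and `c i` the composition length
  of `P i` (the Kupisch series).
* `layer` expresses that the arrows of the quiver are exactly `α_i : i → i+1`:
  the radical of an indecomposable module with top `S i`, when nonzero, has top `S (i+1)`.
* `kOdd j = k_{2j-1}` and `kEven j = k_{2j}` record the start and end indices of the
  `j`-th relation; irredundancy and completeness of the system of relations is recorded
  by `relation_starts` (the chain of inclusions `P_v ↪ P_{v-1}` breaks exactly at the
  starting vertices of the relations); `relation_ends` says that the `j`-th relation
  is a path from `k_{2j-1}` to `k_{2j} + 1` consisting of `c (k_{2j-1})` arrows. -/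
structure CyclicNakayama (R : Type) (Λ : Type) [CommRing R] [Ring Λ] [Algebra R Λ] where
  artinianBase : IsArtinianRing R
  finiteAlgebra : Module.Finite R Λ
  N : ℕ
  three_le_N : 3 ≤ N
  r : ℕ
  one_le_r : 1 ≤ r
  S : ZMod N → ModuleCat.{0} Λ
  S_simple : ∀ i, IsSimpleModule Λ (S i)
  S_complete : ∀ T : ModuleCat.{0} Λ, IsSimpleModule Λ T → ∃ i, Nonempty (T ≃ₗ[Λ] S i)
  S_distinct : ∀ i j, Nonempty (S i ≃ₗ[Λ] S j) → i = j
  nakayama : ∀ M : ModuleCat.{0} Λ, Module.Finite Λ M → Indec Λ M → IsUniserial Λ M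
  P : ZMod N → ModuleCat.{0} Λ
  P_finite : ∀ i, Module.Finite Λ (P i)
  P_projective : ∀ i, Module.Projective Λ (P i)
  P_cover : ∀ i, ∃ f : P i →ₗ[Λ] S i, IsProjCover Λ f
  c : ZMod N → ℕ
  P_length : ∀ i, HasLength Λ (P i) (c i)
  two_le_c : ∀ i, 2 ≤ c i
  layer : ∀ M : ModuleCat.{0} Λ, Module.Finite Λ M → Indec Λ M → ∀ i : ZMod N,
    TopIso Λ M (S i) → radical Λ M ≠ ⊥ →
      TopIso Λ (ModuleCat.of Λ (radical Λ M)) (S (i + 1))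
  kOdd : ZMod r → ZMod N
  kEven : ZMod r → ZMod N
  kOdd_mono : ∀ j j' : ZMod r, j.val < j'.val → (kOdd j).val < (kOdd j').val
  relation_starts : ∀ v : ZMod N, (∃ j, kOdd j = v) ↔ c v ≠ c (v + 1) + 1
  relation_ends : ∀ j, kEven j + 1 = kOdd j + (c (kOdd j) : ZMod N)
  soc_min : ∀ j, SocIso Λ (P (kOdd j)) (S (kEven j))
  soc_classes : ∀ v : ZMod N, ∃ j, SocIso Λ (P v) (S (kEven j))

variable {R : Type} [CommRing R]
variable {Λ} [Algebra R Λ]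

/-- `D` is (a representative of) the module `Δ_j`: a shortest indecomposable module
with top `S_{k_{2(j-1)} + 1}` and socle `S_{k_{2j}}`. -/
def IsDelta (pres : CyclicNakayama R Λ) (j : ZMod pres.r) (D : ModuleCat.{0} Λ) : Prop :=
  Module.Finite Λ D ∧ Indec Λ D ∧
    TopIso Λ D (pres.S (pres.kEven (j - 1) + 1)) ∧ SocIso Λ D (pres.S (pres.kEven j)) ∧
    ∀ D' : ModuleCat.{0} Λ, Module.Finite Λ D' → Indec Λ D' →
      TopIso Λ D' (pres.S (pres.kEven (j - 1) + 1)) → SocIso Λ D' (pres.S (pres.kEven j)) →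
      ∀ n n' : ℕ, HasLength Λ D n → HasLength Λ D' n' → n ≤ n'

/-- `M` is a `Δ`-module: it admits a finite filtration whose successive subquotients
are isomorphic to modules among `Δ_1, …, Δ_r`. -/
def IsDeltaModule (pres : CyclicNakayama R Λ) (Δ : ZMod pres.r → ModuleCat.{0} Λ)
    (M : ModuleCat.{0} Λ) : Prop :=
  ∃ (n : ℕ) (F : Fin (n + 1) → Submodule Λ M), Monotone F ∧ F 0 = ⊥ ∧ F (Fin.last n) = ⊤ ∧
    ∀ i : Fin n, ∃ j : ZMod pres.r,
      Nonempty ((F i.succ ⧸ Submodule.comap (F i.succ).subtype (F i.castSucc)) ≃ₗ[Λ] Δ j)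

end PhiDim

namespace PhiDim

/-! ### Iteration of a monotone degree-one map -/

section Combinatorics

variable {e : ℤ → ℤ} {N : ℕ} {x : ℤ}

lemma iterate_add_mul (per : ∀ v, e (v + N) = e v + N) (n : ℕ) (v m : ℤ) :
    e^[n] (v + m * N) = e^[n] v + m * N := by
  have h1 : ∀ (w m : ℤ), e (w + m * N) = e w + m * N := by
    intro w m
    induction m using Int.induction_on with
    | zero => simp
    | succ i ih =>
      rw [show w + ((i : ℤ) + 1) * N = (w + i * N) + N by ring, per, ih]; ring
    | pred i ih =>
      have := per (w + (-(i : ℤ) - 1) * N)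
      rw [show w + (-(i : ℤ) - 1) * N + N = w + -(i : ℤ) * N by ring, ih] at this
      linarith
  induction n with
  | zero => rfl
  | succ n ih => rw [Function.iterate_succ_apply', Function.iterate_succ_apply', ih, h1]

/-- If no value of `e` lies strictly between `x` and `e x`, then no value of `e^[k + 1]`
lies strictly between `e^[k] x` and `e^[k + 1] x`. -/
lemma iterate_gap (mono : Monotone e) (gap : ∀ v, e v ≤ x ∨ e x ≤ e v) (k : ℕ) (v : ℤ) :
    e^[k + 1] v ≤ e^[k] x ∨ e^[k + 1] x ≤ e^[k + 1] v := by
  induction k with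
  | zero => simpa using gap v
  | succ k ih =>
    rw [Function.iterate_succ_apply' e (k + 1), Function.iterate_succ_apply' e (k + 1),
      Function.iterate_succ_apply' e k x]
    rcases ih with h | h
    · exact .inl (mono h)
    · exact .inr (by
        have := mono h
        rwa [Function.iterate_succ_apply' e k x] at this)

/-- If no value of the monotone, translation-equivariant map `e` lies strictly between `x` and
`e x`, then values of a high iterate of `e` lie on translates of the orbit of `x`; hence iteration
makes any `b ∈ [a, e a]` merge with one of the endpoints. -/
lemma iterate_eq_or_eq (hN : 0 < N) (mono : Monotone e) (per : ∀ v, e (v + N) = e v + N)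
    (gt : ∀ v, v < e v) (gap : ∀ v, e v ≤ x ∨ e x ≤ e v) {a b : ℤ} (hab : a ≤ b) (hb : b ≤ e a) :
    e^[N + 1] b = e^[N + 1] a ∨ e^[N + 1] b = e^[N + 2] a := by
  have gap' : ∀ k ≤ N, ∀ v, e^[N + 1] v ≤ e^[k] x ∨ e^[k + 1] x ≤ e^[N + 1] v := by
    intro k hk v
    have := iterate_gap mono gap k (e^[N - k] v)
    rwa [← Function.iterate_add_apply, show k + 1 + (N - k) = N + 1 by omega] at this
  have grow : ∀ k : ℕ, x + k ≤ e^[k] x := by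
    intro k
    induction k with
    | zero => simp
    | succ k ih =>
      rw [Function.iterate_succ_apply']
      have := gt (e^[k] x)
      push_cast
      omega
  have hN' : (0 : ℤ) < N := by exact_mod_cast hN
  -- Translate by a multiple of `N` so that `e^[N + 1] a` lands in `[x, x + N)`.
  obtain ⟨m, hm1, hm2⟩ : ∃ m : ℤ, x ≤ e^[N + 1] a + m * N ∧ e^[N + 1] a + m * N < x + N := by
    refine ⟨-((e^[N + 1] a - x) / N), ?_, ?_⟩
    · have := Int.ediv_mul_le (e^[N + 1] a - x) hN'.ne'
      linarith
    · have := Int.lt_ediv_add_one_mul_self (e^[N + 1] a - x) hN'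
      linarith
  have hA := iterate_add_mul per (N + 1) a m
  have hB := iterate_add_mul per (N + 1) b m
  have hA2 := iterate_add_mul per (N + 2) a m
  have hab1 := mono.iterate (N + 1) hab
  have hab2 : e^[N + 1] b ≤ e^[N + 2] a := mono.iterate (N + 1) hb
  rw [← hA] at hm1 hm2
  generalize a + m * N = a' at *
  generalize b + m * N = b' at *
  -- The orbit of `x` covers `[x, x + N)`; locate `e^[N + 1] a` between two orbit points.
  obtain ⟨k, hk, hk1, hk2⟩ : ∃ k < N, e^[k] x ≤ e^[N + 1] a' ∧ e^[N + 1] a' < e^[k + 1] x := by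
    by_contra! hcon
    have : ∀ k ≤ N, e^[k] x ≤ e^[N + 1] a' := by
      intro k
      induction k with
      | zero => intro _; simpa using hm1
      | succ k ih => intro hk; exact hcon k (by omega) (ih (by omega))
    have h1 := this N le_rfl
    have h2 := grow N
    omega
  have ha : e^[N + 1] a' = e^[k] x := by
    rcases gap' k hk.le a' with h | h <;> omega
  have ha2 : e^[N + 2] a' = e^[k + 1] x := by
    rw [Function.iterate_succ_apply', ha, ← Function.iterate_succ_apply' e]
  rcases gap' k hk.le b' with h | h
  · left; omega
  · right; omega

/-- The combinatorial shadow of taking syzygies of a module occupying the interval `[a, b)`. -/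
def syzStep (e : ℤ → ℤ) (p : ℤ × ℤ) : ℤ × ℤ := (p.2, e p.1)

lemma syzStep_iterate (e : ℤ → ℤ) (n : ℕ) (a b : ℤ) :
    (syzStep e)^[2 * n] (a, b) = (e^[n] a, e^[n] b) := by
  induction n with
  | zero => rfl
  | succ n ih =>
    rw [show 2 * (n + 1) = (2 * n + 1) + 1 by ring, Function.iterate_succ_apply',
      Function.iterate_succ_apply', ih, Function.iterate_succ_apply', Function.iterate_succ_apply']
    rfl

/-- Under the gap hypothesis, every interval `[a, b)` with `b ≤ e a` becomes empty after a
uniformly bounded number of syzygy steps. -/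
lemma exists_syzStep_degenerate (hN : 0 < N) (mono : Monotone e)
    (per : ∀ v, e (v + N) = e v + N) (gt : ∀ v, v < e v) (gap : ∀ v, e v ≤ x ∨ e x ≤ e v)
    {a b : ℤ} (hab : a ≤ b) (hb : b ≤ e a) :
    ∃ n ≤ 2 * (N + 1) + 1, ((syzStep e)^[n] (a, b)).1 = ((syzStep e)^[n] (a, b)).2 := by
  rcases iterate_eq_or_eq hN mono per gt gap hab hb with h | h
  · exact ⟨2 * (N + 1), by omega, by rw [syzStep_iterate]; exact h.symm⟩
  · refine ⟨2 * (N + 1) + 1, le_rfl, ?_⟩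
    rw [Function.iterate_succ_apply', syzStep_iterate]
    change e^[N + 1] b = e (e^[N + 1] a)
    rw [h, ← Function.iterate_succ_apply' e]

end Combinatorics

/-! ### Vanishing syzygies -/

section Syzygies

variable {Λ : Type} [Ring Λ]

/-- Some `n`-th syzygy of `M` is zero. -/
def SyzVanish (Λ : Type) [Ring Λ] : ℕ → ModuleCat.{0} Λ → Prop
  | 0, M => Subsingleton M
  | n + 1, M => ∃ K : ModuleCat.{0} Λ, IsSyzygy Λ K M ∧ SyzVanish Λ n K

lemma projective_of_subsingleton (M : ModuleCat.{0} Λ) [Subsingleton M] :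
    Module.Projective Λ M :=
  have : Module.Free Λ M := Module.Free.of_subsingleton Λ M
  Module.Projective.of_free

lemma SyzVanish.pdimLE {n : ℕ} {M : ModuleCat.{0} Λ} (h : SyzVanish Λ n M) : PdimLE Λ M n := by
  induction n generalizing M with
  | zero =>
    have : Subsingleton M := h
    exact ⟨M, ⟨LinearEquiv.refl Λ M⟩, projective_of_subsingleton M⟩
  | succ n ih =>
    obtain ⟨K, hK, hn⟩ := h
    obtain ⟨Y, hY, hp⟩ := ih hn
    exact ⟨Y, ⟨K, hK, hY⟩, hp⟩

lemma syzVanish_of_subsingleton (n : ℕ) (M : ModuleCat.{0} Λ) (h : Subsingleton M) :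
    SyzVanish Λ n M := by
  induction n generalizing M with
  | zero => exact h
  | succ n ih =>
    refine ⟨M, ⟨M, LinearMap.id, ⟨projective_of_subsingleton M, Function.surjective_id, ?_⟩, ?_⟩, ih M h⟩
    · intro N _
      exact Subsingleton.elim _ _
    · exact ⟨{ (0 : M →ₗ[Λ] LinearMap.ker (LinearMap.id : M →ₗ[Λ] M)) with
        invFun := 0
        left_inv := fun _ => Subsingleton.elim _ _
        right_inv := fun _ => Subsingleton.elim _ _ }⟩

lemma SyzVanish.mono {m n : ℕ} (hmn : m ≤ n) {M : ModuleCat.{0} Λ} (h : SyzVanish Λ m M) :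
    SyzVanish Λ n M := by
  induction m generalizing M n with
  | zero => exact syzVanish_of_subsingleton n M h
  | succ m ih =>
    obtain ⟨n, rfl⟩ : ∃ k, n = k + 1 := ⟨n - 1, by omega⟩
    obtain ⟨K, hK, hm⟩ := h
    exact ⟨K, hK, ih (by omega) hm⟩

lemma IsSyzygy.congr {K M M' : ModuleCat.{0} Λ} (e : M ≃ₗ[Λ] M') (h : IsSyzygy Λ K M) :
    IsSyzygy Λ K M' := by
  obtain ⟨P, f, ⟨hP, hs, hk⟩, ⟨i⟩⟩ := h
  have hker : LinearMap.ker (e.toLinearMap ∘ₗ f) = LinearMap.ker f := by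
    ext; simp
  refine ⟨P, e.toLinearMap ∘ₗ f, ⟨hP, e.surjective.comp hs, ?_⟩,
    ⟨i.trans (LinearEquiv.ofEq _ _ hker.symm)⟩⟩
  rwa [hker]

lemma SyzVanish.congr {n : ℕ} {M M' : ModuleCat.{0} Λ} (e : M ≃ₗ[Λ] M') (h : SyzVanish Λ n M) :
    SyzVanish Λ n M' := by
  cases n with
  | zero =>
    have : Subsingleton M := h
    exact e.symm.toEquiv.subsingleton
  | succ n =>
    obtain ⟨K, hK, hn⟩ := h
    exact ⟨K, hK.congr e, hn⟩

/-- The image of a superfluous submodule is superfluous. -/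
lemma superfluous_map {P Q : Type} [AddCommGroup P] [Module Λ P] [AddCommGroup Q] [Module Λ Q]
    (φ : P →ₗ[Λ] Q) {K : Submodule Λ P} (hK : ∀ N : Submodule Λ P, N ⊔ K = ⊤ → N = ⊤)
    (N : Submodule Λ Q) (hN : N ⊔ K.map φ = ⊤) : N = ⊤ := by
  have h1 : N.comap φ ⊔ K = ⊤ := by
    rw [eq_top_iff]
    intro p _
    have : φ p ∈ N ⊔ K.map φ := hN ▸ Submodule.mem_top
    obtain ⟨n, hn, _, ⟨k, hk, rfl⟩, h⟩ := Submodule.mem_sup.1 this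
    refine Submodule.mem_sup.2 ⟨p - k, ?_, k, hk, by simp⟩
    rw [Submodule.mem_comap, map_sub, ← h, add_sub_cancel_right]
    exact hn
  have h2 := hK _ h1
  have h3 : K.map φ ≤ N := by
    rintro _ ⟨k, -, rfl⟩
    have : k ∈ N.comap φ := h2 ▸ Submodule.mem_top
    exact this
  rwa [sup_eq_left.2 h3] at hN

lemma IsSyzygy.prod {K M K' M' : ModuleCat.{0} Λ} (h : IsSyzygy Λ K M) (h' : IsSyzygy Λ K' M') :
    IsSyzygy Λ (ModuleCat.of Λ (K × K')) (ModuleCat.of Λ (M × M')) := by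
  obtain ⟨P, f, ⟨hP, hs, hk⟩, ⟨i⟩⟩ := h
  obtain ⟨P', f', ⟨hP', hs', hk'⟩, ⟨i'⟩⟩ := h'
  refine ⟨ModuleCat.of Λ (P × P'), LinearMap.prodMap f f',
    ⟨inferInstanceAs (Module.Projective Λ (P × P')), hs.prodMap hs', ?_⟩, ?_⟩
  · intro N hN
    have hker : LinearMap.ker (LinearMap.prodMap f f') =
        (LinearMap.ker f).map (LinearMap.inl Λ P P') ⊔
          (LinearMap.ker f').map (LinearMap.inr Λ P P') := by
      rw [LinearMap.ker_prodMap, Submodule.map_inl, Submodule.map_inr, Submodule.prod_sup_prod]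
      simp
    refine superfluous_map (LinearMap.inl Λ P P') hk N
      (superfluous_map (LinearMap.inr Λ P P') hk' _ ?_)
    rw [sup_assoc, ← hker]
    exact hN
  · exact ⟨(i.prodCongr i').trans
      { toFun := fun q => ⟨(q.1.1, q.2.1), by
          rw [LinearMap.mem_ker, LinearMap.prodMap_apply]
          exact Prod.ext q.1.2 q.2.2⟩
        map_add' := fun _ _ => rfl
        map_smul' := fun _ _ => rfl
        invFun := fun q => (⟨q.1.1, congrArg Prod.fst q.2⟩, ⟨q.1.2, congrArg Prod.snd q.2⟩)
        left_inv := fun _ => rfl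
        right_inv := fun _ => rfl }⟩

lemma SyzVanish.prod {n : ℕ} {M M' : ModuleCat.{0} Λ} (h : SyzVanish Λ n M)
    (h' : SyzVanish Λ n M') : SyzVanish Λ n (ModuleCat.of Λ (M × M')) := by
  induction n generalizing M M' with
  | zero =>
    have : Subsingleton M := h
    have : Subsingleton M' := h'
    exact inferInstanceAs (Subsingleton (M × M'))
  | succ n ih =>
    obtain ⟨K, hK, hn⟩ := h
    obtain ⟨K', hK', hn'⟩ := h'
    exact ⟨_, hK.prod hK', ih hn hn'⟩

end Syzygies
/-! ### Uniserial modules: radical, socle and top -/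

section Uniserial

variable {Λ : Type} [Ring Λ]

lemma IsUniserial.of_injective {K M : ModuleCat.{0} Λ} (hM : IsUniserial Λ M) (f : K →ₗ[Λ] M)
    (hf : Function.Injective f) : IsUniserial Λ K := by
  intro N₁ N₂
  simpa only [Submodule.map_le_map_iff_of_injective hf] using hM (N₁.map f) (N₂.map f)

lemma IsUniserial.indec {M : ModuleCat.{0} Λ} (hM : IsUniserial Λ M) [hn : Nontrivial M] :
    Indec Λ M := by
  refine ⟨hn, fun N N' h => ?_⟩
  rcases hM N N' with h' | h'
  · exact .inl (h.disjoint.eq_bot_of_le h')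
  · exact .inr (h.symm.disjoint.eq_bot_of_le h')

lemma le_radical {M : Type} [AddCommGroup M] [Module Λ M] {N : Submodule Λ M} (h : N ≠ ⊤) :
    N ≤ radical Λ M := le_sSup h

/-- If every proper submodule lies in the maximal submodule `m`, then `m` is the radical. -/
lemma radical_eq {M : Type} [AddCommGroup M] [Module Λ M] {m : Submodule Λ M} (hm : m ≠ ⊤)
    (h : ∀ N : Submodule Λ M, N ≠ ⊤ → N ≤ m) : radical Λ M = m :=
  le_antisymm (sSup_le h) (le_radical hm)

lemma IsUniserial.isCoatom_radical {M : ModuleCat.{0} Λ} (hM : IsUniserial Λ M)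
    [Module.Finite Λ M] [Nontrivial M] : IsCoatom (radical Λ M) := by
  obtain ⟨m, hm, -⟩ := (eq_top_or_exists_le_coatom (⊥ : Submodule Λ M)).resolve_left bot_ne_top
  rw [radical_eq hm.1 fun N hN => ?_]
  · exact hm
  · rcases hM N m with h | h
    · exact h
    · rcases hm.le_iff.1 h with h | h
      · exact absurd h hN
      · exact h.le

lemma IsUniserial.isAtom_socle {M : ModuleCat.{0} Λ} (hM : IsUniserial Λ M)
    [IsArtinian Λ M] [Nontrivial M] : IsAtom (socle Λ M) := by
  obtain ⟨m, hm, -⟩ := (eq_bot_or_exists_atom_le (⊤ : Submodule Λ M)).resolve_left top_ne_bot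
  have : socle Λ M = m := by
    refine le_antisymm (sInf_le hm.1) (le_sInf fun N hN => ?_)
    rcases hM N m with h | h
    · rcases hm.le_iff.1 h with h | h
      · exact absurd h hN
      · exact h.ge
    · exact h
  rwa [this]

lemma map_radical_le {M M' : Type} [AddCommGroup M] [Module Λ M] [AddCommGroup M'] [Module Λ M']
    (e : M ≃ₗ[Λ] M') : (radical Λ M).map e.toLinearMap ≤ radical Λ M' := by
  rw [Submodule.map_le_iff_le_comap]
  refine sSup_le fun N hN => ?_
  rw [← Submodule.map_le_iff_le_comap]
  refine le_radical fun h => hN ?_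
  rw [eq_top_iff]
  intro x _
  have : e x ∈ N.map e.toLinearMap := h ▸ Submodule.mem_top
  obtain ⟨y, hy, hxy⟩ := this
  rwa [← e.injective hxy]

lemma map_radical {M M' : Type} [AddCommGroup M] [Module Λ M] [AddCommGroup M'] [Module Λ M']
    (e : M ≃ₗ[Λ] M') : (radical Λ M).map e.toLinearMap = radical Λ M' := by
  refine le_antisymm (map_radical_le e) fun x hx => ?_
  exact ⟨e.symm x, map_radical_le e.symm ⟨x, hx, rfl⟩, e.apply_symm_apply x⟩

lemma TopIso.congr {M M' T : ModuleCat.{0} Λ} (e : M ≃ₗ[Λ] M') (h : TopIso Λ M T) :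
    TopIso Λ M' T := by
  obtain ⟨i⟩ := h
  exact ⟨(Submodule.Quotient.equiv _ _ e (map_radical e)).symm.trans i⟩

/-- A simple module is its own top. -/
lemma TopIso.equiv_of_simple {M T : ModuleCat.{0} Λ} [IsSimpleModule Λ M] (h : TopIso Λ M T) :
    Nonempty (M ≃ₗ[Λ] T) := by
  obtain ⟨i⟩ := h
  have hr : radical Λ M = ⊥ :=
    radical_eq bot_ne_top fun N hN => ((eq_bot_or_eq_top N).resolve_right hN).le
  exact ⟨(Submodule.quotEquivOfEqBot _ hr).symm.trans i⟩

lemma length_eq_add (M : Type) [AddCommGroup M] [Module Λ M] (N : Submodule Λ M) :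
    Module.length Λ M = Module.length Λ N + Module.length Λ (M ⧸ N) :=
  Module.length_eq_add_of_exact N.subtype N.mkQ N.subtype_injective N.mkQ_surjective
    (LinearMap.exact_subtype_mkQ N)

lemma hasLength_of_length {M : ModuleCat.{0} Λ} [IsNoetherian Λ M] [IsArtinian Λ M] {n : ℕ}
    (h : Module.length Λ M = n) : HasLength Λ M n := by
  obtain ⟨s, h0, h1⟩ := exists_compositionSeries_of_isNoetherian_isArtinian Λ M
  refine ⟨s, h0, h1, ?_⟩
  rw [← Module.length_compositionSeries s h0 h1] at h
  exact_mod_cast h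

lemma HasLength.length_eq {M : ModuleCat.{0} Λ} {n : ℕ} (h : HasLength Λ M n) :
    Module.length Λ M = n := by
  obtain ⟨s, h0, h1, rfl⟩ := h
  exact (Module.length_compositionSeries s h0 h1).symm

/-- A module of finite length has submodules of every smaller length. -/
lemma exists_submodule_length (M : Type) [AddCommGroup M] [Module Λ M] [IsNoetherian Λ M]
    [IsArtinian Λ M] {n k : ℕ} (h : Module.length Λ M = n) (hk : k ≤ n) :
    ∃ N : Submodule Λ M, Module.length Λ N = k := by
  obtain ⟨N, hN⟩ : ∃ N : Submodule Λ M, Order.height N = k := by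
    rw [Module.length_eq_height] at h
    obtain ⟨p, hp, hl⟩ := Order.exists_series_of_height_eq_coe _ h
    exact ⟨p ⟨k, by omega⟩, Order.height_eq_index_of_length_eq_height_last
      (by rw [hp, h, hl]) ⟨k, by omega⟩⟩
  exact ⟨N, by rw [Module.length_submodule, hN]⟩

end Uniserial

/-! ### Modules over a cyclic Nakayama algebra as intervals -/

section Nakayama

variable {R Λ : Type} [CommRing R] [Ring Λ] [Algebra R Λ] (pres : CyclicNakayama R Λ)

lemma CyclicNakayama.isArtinianRing (pres : CyclicNakayama R Λ) : IsArtinianRing Λ := by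
  have := pres.artinianBase
  have := pres.finiteAlgebra
  exact IsArtinianRing.of_finite R Λ

/-- `M` is indecomposable with composition factors `S_a, S_{a+1}, …, S_{b-1}` from top to socle:
its top is `S_a` and its length is `b - a`. Integer endpoints lift the vertices of the cycle. -/
structure Occupies (M : ModuleCat.{0} Λ) (a b : ℤ) : Prop where
  finite : Module.Finite Λ M
  indec : Indec Λ M
  top : TopIso Λ M (pres.S (a : ZMod pres.N))
  length : ∃ n : ℕ, Module.length Λ M = n ∧ b = a + n

/-- The right endpoint of the interval occupied by the projective cover of `S_v`. -/
def projEnd (v : ℤ) : ℤ := v + pres.c (v : ZMod pres.N)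

variable {pres}

lemma Occupies.uniserial {M : ModuleCat.{0} Λ} {a b : ℤ} (h : Occupies pres M a b) :
    IsUniserial Λ M := pres.nakayama M h.finite h.indec

lemma Occupies.lt {M : ModuleCat.{0} Λ} {a b : ℤ} (h : Occupies pres M a b) : a < b := by
  obtain ⟨n, hn, hb⟩ := h.length
  have := h.indec.1
  have h1 : 0 < Module.length Λ M := Module.length_pos
  rw [hn] at h1
  have : 0 < n := by exact_mod_cast h1
  omega

/-- Every finitely generated indecomposable module occupies an interval. -/
lemma exists_occupies (M : ModuleCat.{0} Λ) (hf : Module.Finite Λ M) (hi : Indec Λ M) :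
    ∃ a b : ℤ, Occupies pres M a b := by
  have := pres.isArtinianRing
  have := hi.1
  have hc := (pres.nakayama M hf hi).isCoatom_radical
  obtain ⟨i, ⟨e⟩⟩ := pres.S_complete (ModuleCat.of Λ (M ⧸ radical Λ M))
    (isSimpleModule_iff_isCoatom.2 hc)
  obtain ⟨a, rfl⟩ := ZMod.intCast_surjective i
  obtain ⟨n, hn⟩ := ENat.ne_top_iff_exists.1 (Module.length_ne_top (R := Λ) (M := M))
  exact ⟨a, a + n, hf, hi, ⟨e⟩, n, hn.symm, rfl⟩

/-- A nonzero submodule of colength `l` of an indecomposable module with top `S_i` has top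
`S_{i+l}`. -/
lemma topIso_of_injective (l : ℕ) {K M : ModuleCat.{0} Λ} (f : K →ₗ[Λ] M)
    (hf : Function.Injective f) [Nontrivial K] (hfin : Module.Finite Λ M) (hM : Indec Λ M)
    {i : ZMod pres.N} (ht : TopIso Λ M (pres.S i))
    (hl : Module.length Λ M = Module.length Λ K + l) : TopIso Λ K (pres.S (i + l)) := by
  have := pres.isArtinianRing
  induction l generalizing M i with
  | zero =>
    have hsurj : LinearMap.range f = ⊤ := by
      by_contra h
      have h1 := Submodule.length_lt h
      rw [← (LinearEquiv.ofInjective f hf).length_eq, hl] at h1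
      simp at h1
    simpa using ht.congr (LinearEquiv.ofBijective f ⟨hf, LinearMap.range_eq_top.1 hsurj⟩).symm
  | succ l ih =>
    have hu := pres.nakayama M hfin hM
    have := hM.1
    have hKtop : Module.length Λ K ≠ ⊤ := by
      have : IsNoetherian Λ K := isNoetherian_of_injective f hf
      have : IsArtinian Λ K := isArtinian_of_injective f hf
      exact Module.length_ne_top
    have hne : LinearMap.range f ≠ ⊤ := by
      intro h
      rw [(LinearEquiv.ofBijective f ⟨hf, LinearMap.range_eq_top.1 h⟩).length_eq] at hl hKtop
      obtain ⟨n, hn⟩ := ENat.ne_top_iff_exists.1 hKtop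
      rw [← hn] at hl
      have : n = n + (l + 1) := by exact_mod_cast hl
      omega
    have hle := le_radical hne
    let g : K →ₗ[Λ] radical Λ M := f.codRestrict _ fun x => hle ⟨x, rfl⟩
    have hg : Function.Injective g := fun x y h => hf (congrArg Subtype.val h)
    have : Nontrivial (radical Λ M) := hg.nontrivial
    have hrad : radical Λ M ≠ ⊥ := Submodule.nontrivial_iff_ne_bot.1 this
    have hru : IsUniserial Λ (ModuleCat.of Λ (radical Λ M)) :=
      hu.of_injective (K := ModuleCat.of Λ (radical Λ M)) (radical Λ M).subtype
        (radical Λ M).subtype_injective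
    have hsimple : IsSimpleModule Λ (M ⧸ radical Λ M) :=
      isSimpleModule_iff_isCoatom.2 hu.isCoatom_radical
    have h1 := length_eq_add M (radical Λ M)
    rw [Module.length_eq_one Λ (M ⧸ radical Λ M), hl] at h1
    have h2 := ih (M := ModuleCat.of Λ (radical Λ M)) g hg
      (inferInstanceAs (Module.Finite Λ (radical Λ M)))
      (hru.indec (hn := this)) (pres.layer M hfin hM i ht hrad) (by
        push_cast at h1
        rw [← add_assoc] at h1
        exact (WithTop.add_right_cancel ENat.one_ne_top h1).symm)
    rwa [show i + ((l + 1 : ℕ) : ZMod pres.N) = i + 1 + l by push_cast; ring]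

lemma Occupies.of_injective {M K : ModuleCat.{0} Λ} {a b : ℤ} (h : Occupies pres M a b)
    (f : K →ₗ[Λ] M) (hf : Function.Injective f) [Nontrivial K] {k : ℕ}
    (hk : Module.length Λ K = k) : Occupies pres K (b - k) b := by
  have := pres.isArtinianRing
  have := h.finite
  have hKfin : Module.Finite Λ K := Module.Finite.of_injective f hf
  obtain ⟨n, hn, hb⟩ := h.length
  have hkn : k ≤ n := by
    have := Module.length_le_of_injective f hf
    rw [hk, hn] at this
    exact_mod_cast this
  obtain ⟨l, rfl⟩ := Nat.exists_eq_add_of_le hkn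
  have := topIso_of_injective l f hf h.finite h.indec h.top (by rw [hn, hk]; push_cast; rfl)
  refine ⟨hKfin, (h.uniserial.of_injective f hf).indec, ?_, k, hk, by ring⟩
  rw [hb]
  push_cast
  rwa [show (a : ZMod pres.N) + (k + l) - k = a + l by ring]

/-- The socle of a module occupying `[a, b)` is `S_{b-1}`. -/
lemma Occupies.eq_of_socIso {M : ModuleCat.{0} Λ} {a b : ℤ} (h : Occupies pres M a b)
    {j : ZMod pres.N} (hj : SocIso Λ M (pres.S j)) : j + 1 = b := by
  have := pres.isArtinianRing
  have := h.finite
  have := h.indec.1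
  have : IsSimpleModule Λ (socle Λ M) := isSimpleModule_iff_isAtom.2 h.uniserial.isAtom_socle
  have : IsSimpleModule Λ (ModuleCat.of Λ (socle Λ M)) := this
  have : Nontrivial (socle Λ M) := IsSimpleModule.nontrivial Λ _
  have h1 := h.of_injective (K := ModuleCat.of Λ (socle Λ M)) (socle Λ M).subtype
    (socle Λ M).subtype_injective (k := 1) (by simp)
  obtain ⟨e⟩ := TopIso.equiv_of_simple (M := ModuleCat.of Λ (socle Λ M)) h1.top
  obtain ⟨e'⟩ := hj
  rw [pres.S_distinct _ _ ⟨e'.symm.trans e⟩]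
  push_cast
  ring

lemma Occupies.exists_socIso {M : ModuleCat.{0} Λ} {a b : ℤ} (h : Occupies pres M a b) :
    SocIso Λ M (pres.S ((b : ZMod pres.N) - 1)) := by
  have := pres.isArtinianRing
  have := h.finite
  have := h.indec.1
  have hs : IsSimpleModule Λ (socle Λ M) := isSimpleModule_iff_isAtom.2 h.uniserial.isAtom_socle
  obtain ⟨i, hi⟩ := pres.S_complete (ModuleCat.of Λ (socle Λ M)) hs
  have := h.eq_of_socIso hi
  rwa [← this, add_sub_cancel_right]

/-- `P_v` occupies `[v, v + c_v)`. -/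
lemma occupies_proj (v : ℤ) : Occupies pres (pres.P v) v (projEnd pres v) := by
  have := pres.isArtinianRing
  obtain ⟨g, hP, hs, hk⟩ := pres.P_cover v
  have hsimple := pres.S_simple (v : ZMod pres.N)
  have hnt : Nontrivial (pres.S (v : ZMod pres.N)) := IsSimpleModule.nontrivial Λ _
  have hcoat : IsCoatom (LinearMap.ker g) := by
    rw [← isSimpleModule_iff_isCoatom]
    exact IsSimpleModule.congr (g.quotKerEquivOfSurjective hs)
  have hle : ∀ N : Submodule Λ (pres.P v), N ≠ ⊤ → N ≤ LinearMap.ker g := by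
    intro N hN
    by_contra h
    exact hN (hk N (by rw [sup_comm]; exact hcoat.2 _ (left_lt_sup.2 h)))
  refine ⟨pres.P_finite v, ⟨hs.nontrivial, fun N N' h => ?_⟩, ?_, pres.c v,
    (pres.P_length v).length_eq, rfl⟩
  · by_cases hN : N = ⊤
    · right
      have := h.inf_eq_bot
      rwa [hN, top_inf_eq] at this
    · by_cases hN' : N' = ⊤
      · left
        have := h.inf_eq_bot
        rwa [hN', inf_top_eq] at this
      · exfalso
        exact hcoat.1 (top_le_iff.1 (h.sup_eq_top ▸ sup_le (hle N hN) (hle N' hN')))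
  · rw [TopIso, radical_eq hcoat.1 hle]
    exact ⟨g.quotKerEquivOfSurjective hs⟩

/-- A module occupying `[a, b)` has projective cover `P_a`. -/
lemma Occupies.exists_projCover {M : ModuleCat.{0} Λ} {a b : ℤ} (h : Occupies pres M a b) :
    ∃ f : pres.P a →ₗ[Λ] M, IsProjCover Λ f := by
  have := pres.isArtinianRing
  have := h.finite
  have := h.indec.1
  obtain ⟨g, hP, hs, hk⟩ := pres.P_cover a
  obtain ⟨i⟩ := h.top
  obtain ⟨f, hf⟩ := Module.projective_lifting_property (radical Λ M).mkQ
    (i.symm.toLinearMap ∘ₗ g) (radical Λ M).mkQ_surjective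
  have hker : LinearMap.ker f ≤ LinearMap.ker g := by
    intro x hx
    have := LinearMap.congr_fun hf x
    rw [LinearMap.comp_apply, LinearMap.mem_ker.1 hx, map_zero] at this
    simpa using this.symm
  refine ⟨f, hP, ?_, fun N hN => hk N (top_le_iff.1 (hN ▸ sup_le_sup_left hker N))⟩
  rw [← LinearMap.range_eq_top]
  by_contra hne
  have hle := le_radical hne
  refine h.uniserial.isCoatom_radical.1 (eq_top_iff.2 fun m _ => ?_)
  obtain ⟨p, hp⟩ := hs (i (Submodule.Quotient.mk m))
  have h1 := LinearMap.congr_fun hf p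
  rw [LinearMap.comp_apply, LinearMap.comp_apply, hp] at h1
  have h2 : (Submodule.Quotient.mk (f p) : M ⧸ radical Λ M) = Submodule.Quotient.mk m := by
    simpa using h1
  have h3 := (Submodule.Quotient.eq _).1 h2
  have h4 := sub_mem (hle ⟨p, rfl⟩) h3
  simpa using h4

lemma Occupies.le_projEnd {M : ModuleCat.{0} Λ} {a b : ℤ} (h : Occupies pres M a b) :
    b ≤ projEnd pres a := by
  obtain ⟨f, -, hs, -⟩ := h.exists_projCover
  obtain ⟨n, hn, rfl⟩ := h.length
  have h1 := Module.length_le_of_surjective f hs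
  rw [hn, (pres.P_length a).length_eq] at h1
  have : n ≤ pres.c a := by exact_mod_cast h1
  rw [projEnd]
  omega

/-- The syzygy of a module occupying `[a, b)` occupies `[b, e(a))`, where `[a, e(a))` is the
interval of `P_a`; it is zero when this interval is empty. -/
lemma Occupies.exists_syzygy {M : ModuleCat.{0} Λ} {a b : ℤ} (h : Occupies pres M a b) :
    ∃ K : ModuleCat.{0} Λ, IsSyzygy Λ K M ∧
      (Subsingleton K ∨ Occupies pres K b (projEnd pres a)) := by
  have := pres.isArtinianRing
  obtain ⟨f, hf⟩ := h.exists_projCover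
  refine ⟨ModuleCat.of Λ (LinearMap.ker f), ⟨_, f, hf, ⟨LinearEquiv.refl _ _⟩⟩, ?_⟩
  rcases subsingleton_or_nontrivial (LinearMap.ker f) with hK | hK
  · exact .inl hK
  right
  have := pres.P_finite a
  obtain ⟨k, hk⟩ := ENat.ne_top_iff_exists.1
    (Module.length_ne_top (R := Λ) (M := LinearMap.ker f))
  have h1 := (occupies_proj (pres := pres) a).of_injective
    (K := ModuleCat.of Λ (LinearMap.ker f)) (LinearMap.ker f).subtype
    (LinearMap.ker f).subtype_injective hk.symm
  obtain ⟨n, hn, rfl⟩ := h.length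
  have h2 := length_eq_add (pres.P a) (LinearMap.ker f)
  rw [(f.quotKerEquivOfSurjective hf.2.1).length_eq, hn, ← hk, (pres.P_length a).length_eq] at h2
  have h3 : pres.c a = k + n := by exact_mod_cast h2
  rwa [show projEnd pres a - k = a + n by rw [projEnd, h3]; push_cast; ring] at h1

/-- If the intervals obtained from `[a, b)` by iterated syzygies degenerate at step `n`, then
the `n`-th syzygy vanishes. -/
lemma Occupies.syzVanish (n : ℕ) {M : ModuleCat.{0} Λ} {a b : ℤ} (h : Occupies pres M a b)
    (hd : ((syzStep (projEnd pres))^[n] (a, b)).1 = ((syzStep (projEnd pres))^[n] (a, b)).2) :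
    SyzVanish Λ n M := by
  induction n generalizing M a b with
  | zero => exact absurd hd h.lt.ne
  | succ n ih =>
    obtain ⟨K, hK, hs | ho⟩ := h.exists_syzygy
    · exact ⟨K, hK, syzVanish_of_subsingleton n K hs⟩
    · exact ⟨K, hK, ih ho hd⟩

/-- A uniform bound on the vanishing of syzygies of indecomposable modules extends to all finitely
generated modules. -/
lemma syzVanish_of_indec (hΛ : IsArtinianRing Λ) {n : ℕ}
    (h : ∀ M : ModuleCat.{0} Λ, Module.Finite Λ M → Indec Λ M → SyzVanish Λ n M)
    (M : ModuleCat.{0} Λ) (hM : Module.Finite Λ M) : SyzVanish Λ n M := by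
  obtain ⟨k, hk⟩ := ENat.ne_top_iff_exists.1 (Module.length_ne_top (R := Λ) (M := M))
  induction k using Nat.strong_induction_on generalizing M with
  | _ k ih =>
    by_cases hi : Indec Λ M
    · exact h M hM hi
    rcases subsingleton_or_nontrivial M with hs | hn
    · exact syzVanish_of_subsingleton n M hs
    simp only [Indec, hn, true_and] at hi
    push Not at hi
    obtain ⟨N, N', hc, hN, hN'⟩ := hi
    have key : ∀ L L' : Submodule Λ M, IsCompl L L' → L' ≠ ⊥ →
        SyzVanish Λ n (ModuleCat.of Λ L) := by
      intro L L' hLL hL'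
      have hLt : L ≠ ⊤ := by
        rintro rfl
        exact hL' (by simpa using hLL.inf_eq_bot)
      have h1 := Submodule.length_lt hLt
      obtain ⟨l, hl⟩ := ENat.ne_top_iff_exists.1 (Module.length_ne_top (R := Λ) (M := L))
      rw [← hl, ← hk] at h1
      exact ih l (by exact_mod_cast h1) (ModuleCat.of Λ L)
        (inferInstanceAs (Module.Finite Λ L)) hl
    exact ((key N N' hc hN').prod (key N' N hc.symm hN)).congr
      (M := ModuleCat.of Λ (N × N')) (Submodule.prodEquivOfIsCompl N N' hc)

/-! ### The endpoints of the indecomposable projectives -/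

lemma projEnd_add (v : ℤ) : projEnd pres (v + pres.N) = projEnd pres v + pres.N := by
  simp only [projEnd]
  push_cast
  rw [ZMod.natCast_self, add_zero]
  ring

lemma lt_projEnd (v : ℤ) : v < projEnd pres v := (occupies_proj v).lt

/-- The radical of `P_v` is a quotient of `P_{v+1}`, so the endpoints are monotone. -/
lemma projEnd_mono : Monotone (projEnd pres) := by
  refine monotone_int_of_le_succ fun v => ?_
  have := pres.isArtinianRing
  have := pres.P_finite v
  have h2 := pres.two_le_c v
  obtain ⟨N, hN⟩ := exists_submodule_length (pres.P v) (pres.P_length v).length_eq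
    (Nat.sub_le (pres.c v) 1)
  have : Nontrivial N := by
    rw [← Module.length_pos_iff (R := Λ), hN]
    exact_mod_cast (by omega : 0 < pres.c v - 1)
  have h := ((occupies_proj (pres := pres) v).of_injective (K := ModuleCat.of Λ N) N.subtype
    N.subtype_injective hN)
  have he : projEnd pres v - ((pres.c v - 1 : ℕ) : ℤ) = v + 1 := by
    rw [projEnd]
    omega
  rw [he] at h
  exact h.le_projEnd

lemma projEnd_succ_eq_iff (v : ℤ) :
    projEnd pres (v + 1) = projEnd pres v ↔ ∀ i, pres.kOdd i ≠ (v : ZMod pres.N) := by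
  rw [← not_exists, pres.relation_starts, not_not, projEnd, projEnd]
  push_cast
  omega

/-- Consecutive relations start at consecutive starting vertices: lifts of `k_{2j-3}` and
`k_{2j-1}` to the integers can be chosen at distance at most `N` and with no starting vertex
strictly between them. -/
lemma exists_consecutive_starts (j : ZMod pres.r) :
    ∃ a b : ℤ, (a : ZMod pres.N) = pres.kOdd (j - 1) ∧ (b : ZMod pres.N) = pres.kOdd j ∧
      a < b ∧ b ≤ a + pres.N ∧
      ∀ v : ℤ, a < v → v < b → ∀ i, pres.kOdd i ≠ (v : ZMod pres.N) := by
  have hN : NeZero pres.N := ⟨by have := pres.three_le_N; omega⟩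
  have hr : NeZero pres.r := ⟨by have := pres.one_le_r; omega⟩
  have hcast : ∀ w : ZMod pres.N, (((w.val : ℕ) : ℤ) : ZMod pres.N) = w := by
    intro w
    simp
  have hval : ∀ v : ℤ, 0 ≤ v → v < pres.N → (((v : ZMod pres.N).val : ℕ) : ℤ) = v := by
    intro v h0 h1
    rw [ZMod.val_intCast, Int.emod_eq_of_lt h0 h1]
  have hmono : ∀ i i' : ZMod pres.r, i.val ≤ i'.val →
      (pres.kOdd i).val ≤ (pres.kOdd i').val := by
    intro i i' h
    rcases h.lt_or_eq with h | h
    · exact (pres.kOdd_mono i i' h).le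
    · rw [ZMod.val_injective _ h]
  have hlt : ∀ w : ZMod pres.N, w.val < pres.N := ZMod.val_lt
  by_cases hj : j = 0
  · subst hj
    have hlast : ∀ i : ZMod pres.r, i.val ≤ (0 - 1 : ZMod pres.r).val := by
      intro i
      have h1 := ZMod.val_lt i
      have h2 : (0 - 1 : ZMod pres.r).val = pres.r - 1 := by
        obtain ⟨s, hs⟩ : ∃ s, pres.r = s + 1 := ⟨pres.r - 1, by omega⟩
        rw [hs, zero_sub]
        exact ZMod.val_neg_one s
      omega
    refine ⟨(pres.kOdd (0 - 1)).val - pres.N, (pres.kOdd 0).val, ?_, hcast _, ?_, ?_, ?_⟩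
    · push_cast
      simp
    · have := hlt (pres.kOdd (0 - 1))
      omega
    · have := hmono 0 (0 - 1) (hlast 0)
      omega
    · intro v h1 h2 i hi
      have h3 := hmono i (0 - 1) (hlast i)
      have h4 := hmono 0 i (by simp)
      have h5 := hlt (pres.kOdd 0)
      by_cases hv : 0 ≤ v
      · have := hval v hv (by omega)
        rw [← hi] at this
        omega
      · have := hval (v + pres.N) (by omega) (by omega)
        push_cast at this
        rw [ZMod.natCast_self, add_zero, ← hi] at this
        omega
  · have hjv : 0 < j.val := ZMod.val_pos.2 hj
    have hpred : (j - 1).val = j.val - 1 := by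
      have h1 := ZMod.val_lt j
      have : Fact (1 < pres.r) := ⟨by omega⟩
      rw [ZMod.val_sub (by rw [ZMod.val_one]; omega), ZMod.val_one]
    have hlt1 := pres.kOdd_mono (j - 1) j (by omega)
    have h5 := hlt (pres.kOdd j)
    refine ⟨(pres.kOdd (j - 1)).val, (pres.kOdd j).val, hcast _, hcast _, by omega, by omega, ?_⟩
    intro v h1 h2 i hi
    have h3 := hval v (by omega) (by omega)
    rw [← hi] at h3
    rcases le_or_gt i.val (j - 1).val with h | h
    · have := hmono _ _ h
      omega
    · have := hmono j i (by omega)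
      omega

/-- The endpoints of the projectives at two consecutive relations are consecutive values of
`projEnd`, and they are at distance at most `N`. -/
lemma exists_consecutive_ends (j : ZMod pres.r) :
    ∃ x y : ℤ, (x : ZMod pres.N) = pres.kEven (j - 1) + 1 ∧
      (y : ZMod pres.N) = pres.kEven j + 1 ∧ x < y ∧ y ≤ x + pres.N ∧
      ∀ v, projEnd pres v ≤ x ∨ y ≤ projEnd pres v := by
  obtain ⟨a, b, ha, hb, hab, hba, hgap⟩ := exists_consecutive_starts (pres := pres) j
  have hconst : ∀ v ≤ b, a < v → projEnd pres v = projEnd pres b := by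
    intro v hv
    induction v, hv using Int.leInductionDown with
    | base => exact fun _ => rfl
    | pred v hv ih =>
      intro hav
      rw [← ih (by omega), ← (projEnd_succ_eq_iff (v - 1)).2 (hgap (v - 1) hav (by omega)),
        sub_add_cancel]
  refine ⟨projEnd pres a, projEnd pres b, ?_, ?_, ?_, ?_, fun v => ?_⟩
  · rw [pres.relation_ends, ← ha, projEnd]
    push_cast
    rfl
  · rw [pres.relation_ends, ← hb, projEnd]
    push_cast
    rfl
  · refine lt_of_le_of_ne (projEnd_mono hab.le) fun h => ?_
    rw [← hconst (a + 1) (by omega) (by omega)] at h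
    exact (projEnd_succ_eq_iff a).1 h.symm _ ha.symm
  · rw [← projEnd_add]
    exact projEnd_mono hba
  · rcases le_or_gt v a with h | h
    · exact .inl (projEnd_mono h)
    · rcases le_or_gt v b with h' | h'
      · exact .inr (hconst v h' h).ge
      · exact .inr (projEnd_mono h'.le)

/-- A projective module occupying `[a, b)` is the projective cover `P_a`. -/
lemma Occupies.eq_projEnd_of_projective {M : ModuleCat.{0} Λ} {a b : ℤ}
    (h : Occupies pres M a b) (hp : Module.Projective Λ M) : b = projEnd pres a := by
  obtain ⟨f, -, hs, hk⟩ := h.exists_projCover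
  obtain ⟨s, hfs⟩ := Module.projective_lifting_property f LinearMap.id hs
  have hfs' : ∀ m, f (s m) = m := fun m => LinearMap.congr_fun hfs m
  -- The image of a section of the projective cover is a supplement of the superfluous kernel.
  have hrange : LinearMap.range s = ⊤ := by
    refine hk _ (eq_top_iff.2 fun p _ => ?_)
    exact Submodule.mem_sup.2 ⟨s (f p), ⟨f p, rfl⟩, p - s (f p), by
      rw [LinearMap.mem_ker, map_sub, hfs', sub_self], by simp⟩
  have hinj : Function.Injective s := fun m m' hm => by rw [← hfs' m, hm, hfs']
  obtain ⟨n, hn, rfl⟩ := h.length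
  have h1 := (LinearEquiv.ofBijective s ⟨hinj, LinearMap.range_eq_top.1 hrange⟩).length_eq
  rw [hn, (pres.P_length a).length_eq] at h1
  have h2 : n = pres.c a := by exact_mod_cast h1
  rw [projEnd, h2]

/-- By minimality of its length, `Δ_j` has length at most `N`. -/
lemma IsDelta.length_le {j : ZMod pres.r} {D : ModuleCat.{0} Λ} (hD : IsDelta pres j D)
    {a b : ℤ} (h : Occupies pres D a b) (ha : (a : ZMod pres.N) = pres.kEven (j - 1) + 1) :
    b ≤ a + pres.N := by
  obtain ⟨hfin, -, -, hsoc, hmin⟩ := hD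
  have := pres.isArtinianRing
  have hN := pres.three_le_N
  obtain ⟨d, hd, rfl⟩ := h.length
  by_contra! hlt
  -- The submodule of length `d - N` has the same top and socle as `D`.
  obtain ⟨K, hK⟩ := exists_submodule_length D hd (Nat.sub_le d pres.N)
  have : Nontrivial K := by
    rw [← Module.length_pos_iff (R := Λ), hK]
    exact_mod_cast (by omega : 0 < d - pres.N)
  have hocc := h.of_injective (K := ModuleCat.of Λ K) K.subtype K.subtype_injective hK
  have htop := hocc.top
  rw [show (a + d - ((d - pres.N : ℕ) : ℤ)) = a + pres.N by omega] at htop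
  push_cast at htop
  rw [ZMod.natCast_self, add_zero, ha] at htop
  have hs := hocc.exists_socIso
  rw [← h.eq_of_socIso hsoc, add_sub_cancel_right] at hs
  have hKfin := hocc.finite
  have := hmin _ hKfin hocc.indec htop hs d (d - pres.N) (hasLength_of_length hd)
    (hasLength_of_length hK)
  omega

end Nakayama

/-- If some `Δ_j` is a projective module, then `Λ` has finite global dimension. -/
theorem finite_globalDim_of_delta_projective {R Λ : Type} [CommRing R] [Ring Λ] [Algebra R Λ]
    (pres : CyclicNakayama R Λ)
    (Δ : ZMod pres.r → ModuleCat.{0} Λ) (hΔ : ∀ j, IsDelta pres j (Δ j))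
    (hproj : ∃ j, Module.Projective Λ (Δ j)) :
    ∃ n : ℕ, GlobalDimLE Λ n := by
  obtain ⟨j, hp⟩ := hproj
  obtain ⟨x, y, hx, hy, hxy, hyx, hgap⟩ := exists_consecutive_ends (pres := pres) j
  have hN : 0 < pres.N := by have := pres.three_le_N; omega
  have hart := pres.isArtinianRing
  have hD := hΔ j
  have := hD.1
  obtain ⟨d, hd⟩ := ENat.ne_top_iff_exists.1 (Module.length_ne_top (R := Λ) (M := Δ j))
  have hocc : Occupies pres (Δ j) x (x + d) :=
    ⟨hD.1, hD.2.1, by rw [hx]; exact hD.2.2.1, d, hd.symm, rfl⟩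
  have hdN := hD.length_le hocc hx
  have hlt := hocc.lt
  have hend := hocc.eq_projEnd_of_projective hp
  have hsoc := hocc.eq_of_socIso hD.2.2.2.1
  -- Both `x + d` and `y` lie in `(x, x + N]` and are congruent to `k_{2j} + 1`.
  have hdy : x + d = y := by
    rw [← hy, ZMod.intCast_eq_intCast_iff_dvd_sub] at hsoc
    have := Int.eq_zero_of_abs_lt_dvd hsoc (by rw [abs_lt]; omega)
    omega
  refine ⟨2 * (pres.N + 1) + 1, fun M hM => SyzVanish.pdimLE ?_⟩
  refine syzVanish_of_indec hart (fun X hX hXi => ?_) M hM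
  obtain ⟨a, b, hab⟩ := exists_occupies (pres := pres) X hX hXi
  obtain ⟨n, hn, hdeg⟩ := exists_syzStep_degenerate (x := x) hN projEnd_mono projEnd_add
    lt_projEnd (by rw [← hend, hdy]; exact hgap) hab.lt.le hab.le_projEnd
  exact (hab.syzVanish n hdeg).mono hn

end PhiDim
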